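/- arXiv:2602.11109 — 4 statements merged into one kernel-verified Lean document; each statement's English description precedes it below -/
import Mathlib

section
/- There exists a constant c > 0 such that for every m ∈ ℕ with m ≥ 1 and every real x ≥ 0, one has |e^{−m·x} − (1 + x)^{−m}| ≤ c / m. -/
open Real

/-!
Since `log (1 + x) ≤ x`, the error `(1 + x)^(-s) - exp (-s x)` is nonnegative, and
`1 - exp (-u) ≤ u` with `u = s (x - log (1 + x)) ≤ s x² / (1 + x)` bounds it by
`s x² (1 + x)^(-(s + 1))`. For `s ≥ 1`, Bernoulli's inequality for the exponent `(s + 1) / 2`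
gives `x² (1 + x)^(-(s + 1)) ≤ (2 / (s + 1))²`, so the error is at most `4 / s`.
For `s ≤ 1` this bound is trivial because the error never exceeds `1`.
-/

lemma one_add_rpow_neg_eq_exp {x : ℝ} (hx : -1 < x) (s : ℝ) :
    (1 + x) ^ (-s) = exp (-(s * log (1 + x))) := by
  rw [rpow_def_of_pos (by linarith)]
  ring_nf

lemma exp_neg_mul_le_one_add_rpow_neg {s x : ℝ} (hs : 0 ≤ s) (hx : -1 < x) :
    exp (-s * x) ≤ (1 + x) ^ (-s) := by
  have log_le : log (1 + x) ≤ x := by linarith [log_le_sub_one_of_pos (show 0 < 1 + x by linarith)]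
  rw [one_add_rpow_neg_eq_exp hx, neg_mul]
  gcongr

lemma sub_log_one_add_le {x : ℝ} (hx : -1 < x) : x - log (1 + x) ≤ x ^ 2 * (1 + x)⁻¹ := by
  have one_add_pos : 0 < 1 + x := by linarith
  calc x - log (1 + x) ≤ x - (1 - (1 + x)⁻¹) := by
        gcongr
        exact one_sub_inv_le_log_of_pos one_add_pos
    _ = x ^ 2 * (1 + x)⁻¹ := by
        field_simp
        ring

lemma one_add_rpow_neg_sub_exp_neg_mul_le {s x : ℝ} (hs : 0 ≤ s) (hx : -1 < x) :
    (1 + x) ^ (-s) - exp (-s * x) ≤ s * (x ^ 2 * (1 + x) ^ (-(s + 1))) := by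
  have one_add_pos : 0 < 1 + x := by linarith
  have exp_factor : exp (-s * x) = (1 + x) ^ (-s) * exp (-(s * (x - log (1 + x)))) := by
    rw [one_add_rpow_neg_eq_exp hx, ← exp_add]
    ring_nf
  calc (1 + x) ^ (-s) - exp (-s * x)
      = (1 + x) ^ (-s) * (1 - exp (-(s * (x - log (1 + x))))) := by
        rw [exp_factor]
        ring
    _ ≤ (1 + x) ^ (-s) * (s * (x - log (1 + x))) := by
        gcongr
        linarith [one_sub_le_exp_neg (s * (x - log (1 + x)))]
    _ ≤ (1 + x) ^ (-s) * (s * (x ^ 2 * (1 + x)⁻¹)) := by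
        gcongr
        exact sub_log_one_add_le hx
    _ = s * (x ^ 2 * (1 + x) ^ (-(s + 1))) := by
        rw [neg_add, rpow_add one_add_pos, rpow_neg_one]
        ring

lemma rpow_mul_one_add_rpow_neg_le {p r x : ℝ} (hp : 0 < p) (hpr : p ≤ r) (hx : 0 ≤ x) :
    x ^ p * (1 + x) ^ (-r) ≤ (p / r) ^ p := by
  have hr : 0 < r := hp.trans_le hpr
  have bernoulli : 1 + r / p * x ≤ (1 + x) ^ (r / p) :=
    one_add_mul_self_le_rpow_one_add (by linarith) ((one_le_div hp).2 hpr)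
  have base_le : x ≤ p / r * (1 + x) ^ (r / p) :=
    calc x = p / r * (r / p * x) := by field_simp
      _ ≤ p / r * (1 + x) ^ (r / p) := by
        gcongr
        linarith
  calc x ^ p * (1 + x) ^ (-r)
      ≤ (p / r * (1 + x) ^ (r / p)) ^ p * (1 + x) ^ (-r) := by gcongr
    _ = (p / r) ^ p := by
        rw [mul_rpow (by positivity) (by positivity), ← rpow_mul (by positivity),
          div_mul_cancel₀ r hp.ne', mul_assoc, ← rpow_add (by positivity), add_neg_cancel,
          rpow_zero, mul_one]

lemma one_add_rpow_neg_sub_exp_neg_mul_le_four_div {s x : ℝ} (hs : 0 < s) (hx : 0 ≤ x) :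
    (1 + x) ^ (-s) - exp (-s * x) ≤ 4 / s := by
  rcases le_total s 1 with s_le_one | one_le_s
  · calc (1 + x) ^ (-s) - exp (-s * x) ≤ 1 - 0 := by
          gcongr
          · exact rpow_le_one_of_one_le_of_nonpos (by linarith) (by linarith)
          · positivity
      _ ≤ 4 / s := by
          rw [le_div_iff₀ hs]
          linarith
  · have decay : x ^ 2 * (1 + x) ^ (-(s + 1)) ≤ (2 / (s + 1)) ^ 2 := by
      exact_mod_cast rpow_mul_one_add_rpow_neg_le two_pos (show 2 ≤ s + 1 by linarith) hx
    calc (1 + x) ^ (-s) - exp (-s * x)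
        ≤ s * (x ^ 2 * (1 + x) ^ (-(s + 1))) :=
          one_add_rpow_neg_sub_exp_neg_mul_le hs.le (by linarith)
      _ ≤ s * (2 / (s + 1)) ^ 2 := by gcongr
      _ ≤ s * (2 / s) ^ 2 := by
          gcongr
          linarith
      _ = 4 / s := by
          field_simp
          norm_num

theorem backward_euler_nonsmooth_symbol_general {s x : ℝ} (hs : 0 < s) (hx : 0 ≤ x) :
    |exp (-s * x) - (1 + x) ^ (-s)| ≤ 4 / s := by
  rw [abs_sub_comm,
    abs_of_nonneg (sub_nonneg.2 (exp_neg_mul_le_one_add_rpow_neg hs.le (by linarith)))]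
  exact one_add_rpow_neg_sub_exp_neg_mul_le_four_div hs hx

/-- Scalar nonsmooth-data error estimate for the backward Euler scheme:
there is `c > 0` with `|e^{-mx} - (1+x)^{-m}| ≤ c/m` for all `m ≥ 1`, `x ≥ 0`. -/
theorem backward_euler_nonsmooth_symbol :
    ∃ c : ℝ, 0 < c ∧ ∀ m : ℕ, 1 ≤ m → ∀ x : ℝ, 0 ≤ x →
      |Real.exp (-(m : ℝ) * x) - ((1 + x) ^ m)⁻¹| ≤ c / (m : ℝ) := by
  refine ⟨4, four_pos, fun m hm x hx => ?_⟩
  rw [← rpow_natCast, ← rpow_neg (by linarith)]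
  exact backward_euler_nonsmooth_symbol_general (Nat.cast_pos.2 hm) hx
end

section
/- There exists a constant c > 0 such that for every θ ∈ [0,1], every m ∈ ℕ with m ≥ 1 and every real x > 0, one has |e^{−m·x} − (1 + x)^{−m}| ≤ c · x^θ · m^{θ−1}. -/
open Real

/-!
Write `P = (1 + x) ^ m`. Bernoulli's inequality applied to `(exp (-x) * (1 + x)) ^ m`, where
`exp (-x) * (1 + x) ≥ 1 - x ^ 2`, bounds the error by `m * x ^ 2 / P`. The linear lower bound
`P ≥ 1 + m * x` turns this into `x`, and the quadratic one into `2 / m` for `x ≤ 2`; for `x ≥ 2`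
already `1 / P ≤ 1 / m`. The geometric mean of the bounds `x` and `2 / m` with weights
`θ` and `1 - θ` is the estimate.
-/

theorem one_add_mul_add_choose_two_mul_sq_le_pow {R : Type*} [CommSemiring R] [PartialOrder R]
    [IsOrderedRing R] {x : R} (hx : 0 ≤ x) (m : ℕ) :
    1 + m * x + m.choose 2 * x ^ 2 ≤ (1 + x) ^ m := by
  induction m with
  | zero => simp
  | succ k ih =>
    have hchoose : (k + 1).choose 2 = k + k.choose 2 := by
      rw [Nat.choose_succ_succ' k 1, Nat.choose_one_right]
    calc 1 + ((k + 1 : ℕ) : R) * x + (k + 1).choose 2 * x ^ 2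
        ≤ 1 + ((k + 1 : ℕ) : R) * x + (k + 1).choose 2 * x ^ 2 + k.choose 2 * x ^ 3 :=
          le_add_of_nonneg_right (by positivity)
      _ = (1 + k * x + k.choose 2 * x ^ 2) * (1 + x) := by rw [hchoose]; push_cast; ring
      _ ≤ (1 + x) ^ k * (1 + x) := mul_le_mul_of_nonneg_right ih (add_nonneg zero_le_one hx)
      _ = (1 + x) ^ (k + 1) := (pow_succ _ _).symm

theorem le_rpow_mul_rpow_one_sub {a b d θ : ℝ} (hd : 0 ≤ d) (hda : d ≤ a) (hdb : d ≤ b)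
    (hθ₀ : 0 ≤ θ) (hθ₁ : θ ≤ 1) : d ≤ a ^ θ * b ^ (1 - θ) := by
  have ha : 0 ≤ a := hd.trans hda
  have hθ₁' : 0 ≤ 1 - θ := sub_nonneg.2 hθ₁
  calc d = d ^ θ * d ^ (1 - θ) := by
        rw [← rpow_add_of_nonneg hd hθ₀ hθ₁', add_sub_cancel, rpow_one]
    _ ≤ a ^ θ * b ^ (1 - θ) := by gcongr

section BackwardEuler

variable {x : ℝ} (m : ℕ)

theorem exp_neg_mul_mul_one_add_pow :
    exp (-(m : ℝ) * x) * (1 + x) ^ m = (exp (-x) * (1 + x)) ^ m := by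
  rw [mul_pow, ← exp_nat_mul, neg_mul_comm]

theorem exp_neg_mul_le_inv_one_add_pow (hx : -1 < x) :
    exp (-(m : ℝ) * x) ≤ ((1 + x) ^ m)⁻¹ := by
  have hx' : 0 < 1 + x := by linarith
  rw [neg_mul, exp_neg, exp_nat_mul]
  gcongr
  linarith [add_one_le_exp x]

theorem one_sub_mul_sq_le_exp_neg_mul_mul_one_add_pow (hx : -1 ≤ x) :
    1 - m * x ^ 2 ≤ exp (-(m : ℝ) * x) * (1 + x) ^ m := by
  have hx' : 0 ≤ 1 + x := by linarith
  have hstep : 1 - x ^ 2 ≤ exp (-x) * (1 + x) :=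
    calc 1 - x ^ 2 = (1 - x) * (1 + x) := by ring
      _ ≤ exp (-x) * (1 + x) := by gcongr; exact one_sub_le_exp_neg x
  have hnonneg : 0 ≤ exp (-x) * (1 + x) := by positivity
  calc 1 - m * x ^ 2 = 1 + m * (1 - x ^ 2 - 1) := by ring
    _ ≤ 1 + m * (exp (-x) * (1 + x) - 1) := by gcongr
    _ ≤ (exp (-x) * (1 + x)) ^ m := one_add_mul_sub_le_pow (by linarith) m
    _ = exp (-(m : ℝ) * x) * (1 + x) ^ m := (exp_neg_mul_mul_one_add_pow m).symm

theorem inv_one_add_pow_sub_exp_neg_mul_le_mul_sq_div (hx : -1 < x) :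
    ((1 + x) ^ m)⁻¹ - exp (-(m : ℝ) * x) ≤ m * x ^ 2 / (1 + x) ^ m := by
  have hpow : 0 < (1 + x) ^ m := pow_pos (by linarith) m
  rw [le_div_iff₀ hpow, sub_mul, inv_mul_cancel₀ hpow.ne']
  linarith [one_sub_mul_sq_le_exp_neg_mul_mul_one_add_pow m hx.le]

theorem inv_one_add_pow_sub_exp_neg_mul_le_self (hx : 0 ≤ x) :
    ((1 + x) ^ m)⁻¹ - exp (-(m : ℝ) * x) ≤ x := by
  refine (inv_one_add_pow_sub_exp_neg_mul_le_mul_sq_div m (by linarith)).trans ?_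
  rw [div_le_iff₀ (by positivity)]
  calc m * x ^ 2 ≤ x * (1 + m * x) := by linarith
    _ ≤ x * (1 + x) ^ m := by gcongr; exact one_add_mul_le_pow (by linarith) m

theorem sq_mul_sq_le_two_mul_one_add_pow (hx₀ : 0 ≤ x) (hx₂ : x ≤ 2) :
    (m : ℝ) ^ 2 * x ^ 2 ≤ 2 * (1 + x) ^ m := by
  have hquadratic := one_add_mul_add_choose_two_mul_sq_le_pow hx₀ m
  rw [Nat.cast_choose_two] at hquadratic
  have hcross : 0 ≤ m * (x * (2 - x)) := by
    have : 0 ≤ 2 - x := sub_nonneg.2 hx₂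
    positivity
  linarith

theorem inv_one_add_pow_sub_exp_neg_mul_le_two_div (hm : m ≠ 0) (hx : 0 ≤ x) :
    ((1 + x) ^ m)⁻¹ - exp (-(m : ℝ) * x) ≤ 2 / m := by
  have hm' : (0 : ℝ) < m := by positivity
  rcases le_total x 2 with hx₂ | hx₂
  · refine (inv_one_add_pow_sub_exp_neg_mul_le_mul_sq_div m (by linarith)).trans ?_
    rw [div_le_div_iff₀ (by positivity) hm']
    linarith [sq_mul_sq_le_two_mul_one_add_pow m hx hx₂]
  · have hpow : (m : ℝ) ≤ (1 + x) ^ m :=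
      calc (m : ℝ) ≤ 1 + m * x := by nlinarith
        _ ≤ (1 + x) ^ m := one_add_mul_le_pow (by linarith) m
    calc ((1 + x) ^ m)⁻¹ - exp (-(m : ℝ) * x) ≤ ((1 + x) ^ m)⁻¹ :=
          sub_le_self _ (exp_nonneg _)
      _ ≤ (m : ℝ)⁻¹ := by gcongr
      _ ≤ 2 / m := by rw [inv_eq_one_div]; gcongr; norm_num

end BackwardEuler

/-- Interpolated scalar error estimate for the backward Euler scheme:
there is `c > 0` with `|e^{-mx} - (1+x)^{-m}| ≤ c x^θ m^{θ-1}` for all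
`θ ∈ [0,1]`, `m ≥ 1` and `x > 0`. -/
theorem backward_euler_interpolated_symbol :
    ∃ c : ℝ, 0 < c ∧ ∀ θ : ℝ, θ ∈ Set.Icc (0:ℝ) 1 → ∀ m : ℕ, 1 ≤ m → ∀ x : ℝ, 0 < x →
      |Real.exp (-(m : ℝ) * x) - ((1 + x) ^ m)⁻¹| ≤ c * x ^ θ * (m : ℝ) ^ (θ - 1) := by
  refine ⟨2, two_pos, fun θ ⟨hθ₀, hθ₁⟩ m hm x hx => ?_⟩
  have hle := exp_neg_mul_le_inv_one_add_pow m (by linarith : -1 < x)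
  have hself := inv_one_add_pow_sub_exp_neg_mul_le_self m hx.le
  have hdiv := inv_one_add_pow_sub_exp_neg_mul_le_two_div m (by lia) hx.le
  rw [abs_sub_comm, abs_of_nonneg (sub_nonneg.2 hle)]
  calc ((1 + x) ^ m)⁻¹ - exp (-(m : ℝ) * x)
      ≤ x ^ θ * (2 / m) ^ (1 - θ) :=
        le_rpow_mul_rpow_one_sub (sub_nonneg.2 hle) hself hdiv hθ₀ hθ₁
    _ = 2 ^ (1 - θ) * x ^ θ * (m : ℝ) ^ (θ - 1) := by
        rw [div_rpow two_pos.le m.cast_nonneg, ← neg_sub 1 θ, rpow_neg m.cast_nonneg]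
        ring
    _ ≤ 2 * x ^ θ * (m : ℝ) ^ (θ - 1) := by
        gcongr
        exact rpow_le_self_of_one_le one_le_two (by linarith)
end

section
/- There exists a constant c > 0 such that the following holds: for every μ ∈ [0,2], every sequence of positive reals (λ_k)_{k∈ℕ}, every Δt > 0, every m ∈ ℕ with m ≥ 1, and every real sequence x = (x_k)_{k∈ℕ} such that (λ_k^{μ/2} x_k)_k is square-summable, the sequence ((e^{−m Δt λ_k} − (1 + Δt λ_k)^{−m}) x_k)_k is square-summable and ‖((e^{−m Δt λ_k} − (1+Δt λ_k)^{−m}) x_k)_k‖_{ℓ²} ≤ c · Δt · (m·Δt)^{−(2−μ)/2} · ‖(λ_k^{μ/2} x_k)_k‖_{ℓ²}. -/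
open Real

/-!
Put `s = Δt λ` and `y = m s`. The one-step error obeys
`0 ≤ (1 + s)⁻¹ - e⁻ˢ ≤ (s / (1 + s))²`, and telescoping gives
`m |e⁻ʸ - (1 + s)⁻ᵐ| ≤ y² / (1 + s)ᵐ⁺¹`. Bounding the denominator below by the terms of degree `0`
and `2` of its binomial expansion, the right-hand side is at most `2 min(1, y²) ≤ 2 y^θ` for every
`θ ∈ [0, 2]`. With `θ = μ / 2` this bounds each multiplier, hence the `ℓ²` norm.
-/

section Scalar

lemma choose_mul_pow_le_one_add_pow {R : Type*} [CommSemiring R] [PartialOrder R]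
    [IsOrderedRing R] {a : R} (ha : 0 ≤ a) (n k : ℕ) :
    (n.choose k : R) * a ^ k ≤ (1 + a) ^ n := by
  rcases lt_or_ge n k with hnk | hkn
  · simpa [Nat.choose_eq_zero_of_lt hnk] using pow_nonneg (add_nonneg zero_le_one ha) n
  · rw [add_comm 1 a, add_pow]
    simp only [one_pow, mul_one]
    rw [mul_comm]
    exact Finset.single_le_sum (f := fun j => a ^ j * (n.choose j : R))
      (fun j _ => mul_nonneg (pow_nonneg ha j) (Nat.cast_nonneg _))
      (Finset.mem_range_succ_iff.mpr hkn)

lemma min_one_rpow_le_rpow {y p θ : ℝ} (hy : 0 ≤ y) (hθ : 0 ≤ θ) (hθp : θ ≤ p) :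
    min 1 (y ^ p) ≤ y ^ θ := by
  rcases le_total y 1 with hy1 | hy1
  · exact (min_le_right _ _).trans (rpow_le_rpow_of_exponent_ge' hy hy1 hθ hθp)
  · exact (min_le_left _ _).trans (one_le_rpow hy1 hθ)

variable {s : ℝ}

lemma exp_neg_le_inv_one_add (hs : -1 < s) : exp (-s) ≤ (1 + s)⁻¹ := by
  rw [exp_neg]
  exact inv_anti₀ (by linarith) (by linarith [add_one_le_exp s])

lemma inv_one_add_sub_exp_neg_le (hs : -1 < s) :
    (1 + s)⁻¹ - exp (-s) ≤ (s / (1 + s)) ^ 2 := by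
  have hpos : 0 < 1 + s := by linarith
  have hexp : (1 + s - s ^ 2) / (1 + s) ^ 2 ≤ exp (-s) := by
    rw [div_le_iff₀ (by positivity)]
    rcases le_total s 2 with hs2 | hs2
    · have hhalf : (1 - s / 2) ^ 2 ≤ exp (-s) := by
        simpa using one_sub_div_pow_le_exp_neg (n := 2) (t := s) (by simpa using hs2)
      calc 1 + s - s ^ 2
          ≤ 1 + s - s ^ 2 + (s * (1 - s) / 2) ^ 2 := le_add_of_nonneg_right (sq_nonneg _)
        _ = (1 - s / 2) ^ 2 * (1 + s) ^ 2 := by ring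
        _ ≤ exp (-s) * (1 + s) ^ 2 := by gcongr
    · calc 1 + s - s ^ 2 ≤ 0 := by nlinarith
        _ ≤ exp (-s) * (1 + s) ^ 2 := by positivity
  have hsplit : (1 + s)⁻¹ - (s / (1 + s)) ^ 2 = (1 + s - s ^ 2) / (1 + s) ^ 2 := by
    field_simp
  linarith

lemma abs_exp_neg_mul_sub_inv_pow_le (hs : 0 ≤ s) (m : ℕ) :
    |exp (-(m * s)) - ((1 + s) ^ m)⁻¹| ≤ m * s ^ 2 / (1 + s) ^ (m + 1) := by
  rcases m with _ | n
  · simp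
  have hle : exp (-s) ≤ (1 + s)⁻¹ := exp_neg_le_inv_one_add (by linarith)
  have hmax : max |exp (-s)| |(1 + s)⁻¹| = (1 + s)⁻¹ := by
    rw [abs_of_pos (exp_pos _), abs_of_pos (by positivity), max_eq_right hle]
  have hstep : |exp (-s) - (1 + s)⁻¹| ≤ (s / (1 + s)) ^ 2 := by
    rw [abs_sub_comm, abs_of_nonneg (sub_nonneg.mpr hle)]
    exact inv_one_add_sub_exp_neg_le (by linarith)
  calc |exp (-((n + 1 : ℕ) * s)) - ((1 + s) ^ (n + 1))⁻¹|
      = |exp (-s) ^ (n + 1) - (1 + s)⁻¹ ^ (n + 1)| := by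
        rw [← exp_nat_mul, mul_neg, inv_pow]
    _ ≤ |exp (-s) - (1 + s)⁻¹| * (n + 1 : ℕ) * (1 + s)⁻¹ ^ n := by
        simpa only [hmax, Nat.add_sub_cancel] using abs_pow_sub_pow_le (exp (-s)) (1 + s)⁻¹ (n + 1)
    _ ≤ (s / (1 + s)) ^ 2 * (n + 1 : ℕ) * (1 + s)⁻¹ ^ n := by gcongr
    _ = (n + 1 : ℕ) * s ^ 2 / (1 + s) ^ (n + 1 + 1) := by
        rw [inv_pow]
        field_simp
        ring

lemma mul_abs_exp_neg_mul_sub_inv_pow_le (hs : 0 ≤ s) (m : ℕ) :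
    m * |exp (-(m * s)) - ((1 + s) ^ m)⁻¹| ≤ 2 * min 1 ((m * s) ^ 2) := by
  have herror : m * |exp (-(m * s)) - ((1 + s) ^ m)⁻¹| ≤ (m * s) ^ 2 / (1 + s) ^ (m + 1) :=
    calc m * |exp (-(m * s)) - ((1 + s) ^ m)⁻¹|
        ≤ m * (m * s ^ 2 / (1 + s) ^ (m + 1)) := by
          gcongr
          exact abs_exp_neg_mul_sub_inv_pow_le hs m
      _ = (m * s) ^ 2 / (1 + s) ^ (m + 1) := by ring
  have hconst : 1 ≤ (1 + s) ^ (m + 1) := one_le_pow₀ (by linarith)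
  have hquad : (m + 1) * m / 2 * s ^ 2 ≤ (1 + s) ^ (m + 1) := by
    simpa [Nat.cast_choose_two] using choose_mul_pow_le_one_add_pow hs (m + 1) 2
  rw [mul_min_of_nonneg _ _ zero_le_two]
  refine herror.trans (le_min ?_ ?_) <;> rw [div_le_iff₀ (by positivity)]
  · nlinarith [show 0 ≤ m * s ^ 2 by positivity]
  · nlinarith [sq_nonneg (m * s)]

lemma abs_exp_sub_backward_euler_le {θ : ℝ} (hθ : θ ∈ Set.Icc (0 : ℝ) 2) {l Δt : ℝ}
    (hl : 0 ≤ l) (hΔt : 0 < Δt) {m : ℕ} (hm : 1 ≤ m) :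
    |exp (-(m : ℝ) * Δt * l) - ((1 + Δt * l) ^ m)⁻¹| ≤
      2 * Δt * (m * Δt) ^ (θ - 1) * l ^ θ := by
  have hm0 : (0 : ℝ) < m := by exact_mod_cast hm
  have hscale : m * (2 * Δt * (m * Δt) ^ (θ - 1) * l ^ θ) = 2 * (m * (Δt * l)) ^ θ := by
    rw [rpow_sub_one (by positivity), ← mul_assoc (m : ℝ) Δt l, mul_rpow (by positivity) hl]
    field_simp
  refine le_of_mul_le_mul_left ?_ hm0
  calc m * |exp (-(m : ℝ) * Δt * l) - ((1 + Δt * l) ^ m)⁻¹|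
      = m * |exp (-(m * (Δt * l))) - ((1 + Δt * l) ^ m)⁻¹| := by
        rw [neg_mul, neg_mul, mul_assoc (m : ℝ)]
    _ ≤ 2 * min 1 ((m * (Δt * l)) ^ 2) :=
        mul_abs_exp_neg_mul_sub_inv_pow_le (by positivity) m
    _ ≤ 2 * (m * (Δt * l)) ^ θ := by
        gcongr
        simpa only [rpow_two] using
          min_one_rpow_le_rpow (by positivity : 0 ≤ m * (Δt * l)) hθ.1 hθ.2
    _ = m * (2 * Δt * (m * Δt) ^ (θ - 1) * l ^ θ) := hscale.symm

end Scalar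

lemma summable_sq_and_sqrt_tsum_sq_le {ι : Type*} {f g : ι → ℝ} {C : ℝ} (hC : 0 ≤ C)
    (hfg : ∀ i, |f i| ≤ C * |g i|) (hg : Summable fun i => g i ^ 2) :
    (Summable fun i => f i ^ 2) ∧ √(∑' i, f i ^ 2) ≤ C * √(∑' i, g i ^ 2) := by
  have hsq : ∀ i, f i ^ 2 ≤ C ^ 2 * g i ^ 2 := fun i => by
    simpa only [sq_abs, mul_pow] using pow_le_pow_left₀ (abs_nonneg (f i)) (hfg i) 2
  have hf : Summable fun i => f i ^ 2 :=
    .of_nonneg_of_le (fun i => sq_nonneg (f i)) hsq (hg.mul_left (C ^ 2))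
  refine ⟨hf, ?_⟩
  calc √(∑' i, f i ^ 2) ≤ √(∑' i, C ^ 2 * g i ^ 2) :=
        sqrt_le_sqrt (hf.tsum_le_tsum hsq (hg.mul_left (C ^ 2)))
    _ = C * √(∑' i, g i ^ 2) := by
        rw [tsum_mul_left, sqrt_mul (sq_nonneg C), sqrt_sq hC]

theorem backward_euler_error_diagonal_general {ι : Type*} {μ : ℝ} (hμ : μ ∈ Set.Icc (0 : ℝ) 4)
    {lam : ι → ℝ} (hlam : ∀ k, 0 ≤ lam k) {Δt : ℝ} (hΔt : 0 < Δt) {m : ℕ} (hm : 1 ≤ m)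
    {x : ι → ℝ} (hx : Summable fun k => (lam k ^ (μ / 2) * x k) ^ 2) :
    (Summable fun k => ((exp (-(m : ℝ) * Δt * lam k) - ((1 + Δt * lam k) ^ m)⁻¹) * x k) ^ 2) ∧
      √(∑' k, ((exp (-(m : ℝ) * Δt * lam k) - ((1 + Δt * lam k) ^ m)⁻¹) * x k) ^ 2) ≤
        2 * Δt * ((m : ℝ) * Δt) ^ (-((2 - μ) / 2)) * √(∑' k, (lam k ^ (μ / 2) * x k) ^ 2) := by
  have hexponent : -((2 - μ) / 2) = μ / 2 - 1 := by ring
  have hθ : μ / 2 ∈ Set.Icc (0 : ℝ) 2 := ⟨by linarith [hμ.1], by linarith [hμ.2]⟩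
  rw [hexponent]
  refine summable_sq_and_sqrt_tsum_sq_le (by positivity) (fun k => ?_) hx
  rw [abs_mul, abs_mul, abs_of_nonneg (rpow_nonneg (hlam k) _), ← mul_assoc]
  gcongr
  exact abs_exp_sub_backward_euler_le hθ (hlam k) hΔt hm

/-- Spectral (diagonal) form of the backward Euler semigroup error estimate:
there is `c > 0` such that for `μ ∈ [0,2]`, positive `(λ_k)`, `Δt > 0`, `m ≥ 1`
and any `(x_k)` with `(λ_k^{μ/2} x_k) ∈ ℓ²`, the sequence
`((e^{-mΔtλ_k} - (1+Δtλ_k)^{-m}) x_k)` is in `ℓ²` with norm at most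
`c Δt (mΔt)^{-(2-μ)/2} ‖(λ_k^{μ/2} x_k)‖_{ℓ²}`. -/
theorem backward_euler_error_diagonal :
    ∃ c : ℝ, 0 < c ∧ ∀ μ : ℝ, μ ∈ Set.Icc (0:ℝ) 2 → ∀ lam : ℕ → ℝ, (∀ k, 0 < lam k) →
      ∀ Δt : ℝ, 0 < Δt → ∀ m : ℕ, 1 ≤ m → ∀ x : ℕ → ℝ,
      (Summable fun k => (lam k ^ (μ / 2) * x k) ^ 2) →
      (Summable fun k =>
          ((Real.exp (-(m : ℝ) * Δt * lam k) - ((1 + Δt * lam k) ^ m)⁻¹) * x k) ^ 2) ∧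
        Real.sqrt (∑' k,
            ((Real.exp (-(m : ℝ) * Δt * lam k) - ((1 + Δt * lam k) ^ m)⁻¹) * x k) ^ 2)
          ≤ c * Δt * ((m : ℝ) * Δt) ^ (-((2 - μ) / 2)) *
              Real.sqrt (∑' k, (lam k ^ (μ / 2) * x k) ^ 2) := by
  exact ⟨2, two_pos, fun μ hμ lam hlam Δt hΔt m hm x hx =>
    backward_euler_error_diagonal_general ⟨hμ.1, by linarith [hμ.2]⟩
      (fun k => (hlam k).le) hΔt hm hx⟩
end

section
/- For every T > 0 and every c₂ ≥ 0 there exists a constant C > 0 such that: for every N ∈ ℕ with N ≥ 1, setting Δt := T/N and t_j := j·Δt, for every c₁ ≥ 0 and every finite sequence of nonnegative real numbers (x_n)_{n=0}^{N} satisfying x_n ≤ c₁ + c₂ · Δt · ∑_{j=1}^{n} (t_n − t_{j−1})^{−1/2} · x_{j−1} for all n ∈ {0, 1, …, N}, it holds that x_n ≤ C · c₁ for all n ∈ {0, 1, …, N}. -/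
open Real Finset

/-!
Let `K` be nonnegative, antitone and integrable on `(0, T]`, as `s ^ (-1/2)` is. By dominated
convergence, `c₂ ∫₀ᵀ e^{-ls} K(s) ds ≤ 1/2` once `l` is large. Since antitone functions dominate
their right Riemann sums, the kernel weighted by `e^{-ls}` has discrete mass at most `1/2` on every
grid, with the same `l`. Strong induction then gives `x n ≤ 2 c₁ e^{l tₙ} ≤ 2 e^{lT} c₁`.
-/

section

open MeasureTheory Filter Topology

theorem sum_Icc_one_eq_sum_range_sub {M : Type*} [AddCommMonoid M] (f : ℕ → M) (n : ℕ) :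
    ∑ j ∈ Icc 1 n, f j = ∑ k ∈ range n, f (n - k) := by
  refine sum_nbij' (n - ·) (n - ·) ?_ ?_ ?_ ?_ ?_ <;> intro j hj <;>
    simp only [mem_Icc, mem_range] at hj ⊢
  any_goals omega
  rw [Nat.sub_sub_self hj.2]

theorem le_div_mul_pow_of_le_add_sum {F : Type*} [Field F] [LinearOrder F]
    [IsStrictOrderedRing F] {w x : ℕ → F} {c θ q : F} {N : ℕ}
    (hw : ∀ k < N, 0 ≤ w (k + 1)) (hc : 0 ≤ c) (hq : 1 ≤ q) (hθ : θ < 1)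
    (hsum : ∑ k ∈ range N, w (k + 1) * (q ^ (k + 1))⁻¹ ≤ θ)
    (hx : ∀ n ≤ N, x n ≤ c + ∑ k ∈ range n, w (k + 1) * x (n - (k + 1))) :
    ∀ n ≤ N, x n ≤ c / (1 - θ) * q ^ n := by
  intro n
  induction n using Nat.strong_induction_on with
  | _ n ih =>
    intro hn
    have hq₀ : 0 < q := one_pos.trans_le hq
    have hθ' : 0 < 1 - θ := sub_pos.2 hθ
    have partial_sum_le : ∑ k ∈ range n, w (k + 1) * (q ^ (k + 1))⁻¹ ≤ θ := by
      refine (sum_le_sum_of_subset_of_nonneg (range_mono hn) fun k hk _ ↦ ?_).trans hsum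
      exact mul_nonneg (hw k (mem_range.1 hk)) (by positivity)
    have term_le : ∀ k ∈ range n, w (k + 1) * x (n - (k + 1)) ≤
        c / (1 - θ) * q ^ n * (w (k + 1) * (q ^ (k + 1))⁻¹) := by
      intro k hk
      have hkn : k + 1 ≤ n := mem_range.1 hk
      calc w (k + 1) * x (n - (k + 1))
          ≤ w (k + 1) * (c / (1 - θ) * q ^ (n - (k + 1))) :=
            mul_le_mul_of_nonneg_left (ih _ (by omega) (by omega)) (hw k (by omega))
        _ = c / (1 - θ) * q ^ n * (w (k + 1) * (q ^ (k + 1))⁻¹) := by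
            rw [pow_sub₀ q hq₀.ne' hkn]
            ring
    calc x n ≤ c + ∑ k ∈ range n, w (k + 1) * x (n - (k + 1)) := hx n hn
      _ ≤ c + c / (1 - θ) * q ^ n * ∑ k ∈ range n, w (k + 1) * (q ^ (k + 1))⁻¹ := by
          rw [mul_sum]
          exact add_le_add_right (sum_le_sum term_le) c
      _ ≤ c * q ^ n + c / (1 - θ) * q ^ n * θ := by
          gcongr
          exact le_mul_of_one_le_right hc (one_le_pow₀ hq)
      _ = c / (1 - θ) * q ^ n := by
          field_simp [hθ'.ne']
          ring

theorem mul_sum_range_le_integral_of_antitoneOn {f : ℝ → ℝ} {h : ℝ} {n : ℕ} (hh : 0 ≤ h)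
    (hf : AntitoneOn f (Set.Ioc 0 (n * h)))
    (hfi : IntegrableOn f (Set.Ioc 0 (n * h))) :
    h * ∑ k ∈ range n, f ((k + 1 : ℕ) * h) ≤ ∫ s in 0..n * h, f s := by
  have cell_subset : ∀ k < n, Set.Ioc (k * h) ((k + 1 : ℕ) * h) ⊆ Set.Ioc 0 (n * h) :=
    fun k hk ↦ Set.Ioc_subset_Ioc (by positivity) (by gcongr; exact hk)
  have cell_le (k : ℕ) : k * h ≤ (k + 1 : ℕ) * h := by gcongr; exact k.le_succ
  have cell_integrable : ∀ k < n,
      IntervalIntegrable f volume (k * h) ((k + 1 : ℕ) * h) := fun k hk ↦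
    (intervalIntegrable_iff_integrableOn_Ioc_of_le (cell_le k)).2 (hfi.mono_set (cell_subset k hk))
  have mul_le_cell_integral : ∀ k < n,
      h * f ((k + 1 : ℕ) * h) ≤ ∫ s in k * h..(k + 1 : ℕ) * h, f s := by
    intro k hk
    calc h * f ((k + 1 : ℕ) * h) = ∫ _ in k * h..(k + 1 : ℕ) * h, f ((k + 1 : ℕ) * h) := by
          rw [intervalIntegral.integral_const, smul_eq_mul]
          push_cast
          ring
      _ ≤ ∫ s in k * h..(k + 1 : ℕ) * h, f s := by
          refine intervalIntegral.integral_mono_on_of_le_Ioo (cell_le k) (by simp)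
            (cell_integrable k hk) fun s hs ↦ ?_
          exact hf (cell_subset k hk ⟨hs.1, hs.2.le⟩)
            (cell_subset k hk ⟨hs.1.trans hs.2, le_rfl⟩) hs.2.le
  calc h * ∑ k ∈ range n, f ((k + 1 : ℕ) * h)
      ≤ ∑ k ∈ range n, ∫ s in k * h..(k + 1 : ℕ) * h, f s := by
        rw [mul_sum]
        exact sum_le_sum fun k hk ↦ mul_le_cell_integral k (mem_range.1 hk)
    _ = ∫ s in 0..n * h, f s := by
        simpa only [Nat.cast_zero, zero_mul] using
          intervalIntegral.sum_integral_adjacent_intervals (a := fun k : ℕ ↦ k * h) cell_integrable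

theorem tendsto_integral_exp_neg_mul_smul_atTop {E : Type*} [NormedAddCommGroup E]
    [NormedSpace ℝ E] {μ : Measure ℝ} {f : ℝ → E} (hμ : ∀ᵐ s ∂μ, 0 < s) (hf : Integrable f μ) :
    Tendsto (fun l : ℝ ↦ ∫ s, exp (-(l * s)) • f s ∂μ) atTop (𝓝 0) := by
  rw [← integral_zero ℝ E (μ := μ)]
  refine tendsto_integral_filter_of_dominated_convergence (fun s ↦ ‖f s‖) ?_ ?_ hf.norm ?_
  · exact .of_forall fun l ↦
      (by fun_prop : Continuous fun s ↦ exp (-(l * s))).aestronglyMeasurable.smul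
        hf.aestronglyMeasurable
  · filter_upwards [eventually_ge_atTop 0] with l hl
    filter_upwards [hμ] with s hs
    rw [norm_smul, norm_of_nonneg (exp_nonneg _)]
    exact mul_le_of_le_one_left (norm_nonneg _) (exp_le_one_iff.2 (by simpa using by positivity))
  · filter_upwards [hμ] with s hs
    have exp_tendsto : Tendsto (fun l : ℝ ↦ exp (-(l * s))) atTop (𝓝 0) :=
      tendsto_exp_neg_atTop_nhds_zero.comp (tendsto_id.atTop_mul_const hs)
    simpa only [zero_smul] using exp_tendsto.smul_const (f s)

variable {T c₂ : ℝ} {K : ℝ → ℝ}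

theorem antitoneOn_exp_neg_mul_mul {S : Set ℝ} {l : ℝ} (hl : 0 ≤ l)
    (hK : AntitoneOn K S) (hK₀ : ∀ s ∈ S, 0 ≤ K s) :
    AntitoneOn (fun s ↦ exp (-(l * s)) * K s) S := by
  intro s hs t ht hst
  exact mul_le_mul (exp_le_exp.2 (by gcongr)) (hK hs ht hst) (hK₀ t ht) (exp_nonneg _)

theorem exists_mul_integral_exp_neg_mul_mul_le (hT : 0 ≤ T)
    (hKi : IntegrableOn K (Set.Ioc 0 T)) (c₂ : ℝ) {θ : ℝ} (hθ : 0 < θ) :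
    ∃ l : ℝ, 0 ≤ l ∧ c₂ * ∫ s in 0..T, exp (-(l * s)) * K s ≤ θ := by
  have ae_pos : ∀ᵐ s ∂volume.restrict (Set.Ioc 0 T), 0 < s :=
    (ae_restrict_mem measurableSet_Ioc).mono fun _ hs ↦ hs.1
  have tendsto_zero := (tendsto_integral_exp_neg_mul_smul_atTop ae_pos hKi).const_mul c₂
  rw [mul_zero] at tendsto_zero
  obtain ⟨l, hl, hlθ⟩ :=
    ((eventually_ge_atTop 0).and (tendsto_zero.eventually_le_const hθ)).exists
  exact ⟨l, hl, by simpa only [intervalIntegral.integral_of_le hT, smul_eq_mul] using hlθ⟩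

theorem sum_range_mul_inv_exp_pow_le_integral {h l : ℝ} {N : ℕ} (hh : 0 ≤ h) (hl : 0 ≤ l)
    (hc₂ : 0 ≤ c₂) (hK : AntitoneOn K (Set.Ioc 0 (N * h)))
    (hK₀ : ∀ s ∈ Set.Ioc 0 (N * h), 0 ≤ K s) (hKi : IntegrableOn K (Set.Ioc 0 (N * h))) :
    ∑ k ∈ range N, c₂ * h * K ((k + 1 : ℕ) * h) * (exp (l * h) ^ (k + 1))⁻¹ ≤
      c₂ * ∫ s in 0..N * h, exp (-(l * s)) * K s := by
  have weighted_integrable :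
      IntegrableOn (fun s ↦ exp (-(l * s)) * K s) (Set.Ioc 0 (N * h)) := by
    refine hKi.bdd_mul (c := 1) (by fun_prop) ?_
    filter_upwards [ae_restrict_mem measurableSet_Ioc] with s hs
    rw [norm_of_nonneg (exp_nonneg _)]
    exact exp_le_one_iff.2 (neg_nonpos.2 (mul_nonneg hl hs.1.le))
  calc ∑ k ∈ range N, c₂ * h * K ((k + 1 : ℕ) * h) * (exp (l * h) ^ (k + 1))⁻¹
      = c₂ * (h * ∑ k ∈ range N, exp (-(l * ((k + 1 : ℕ) * h))) * K ((k + 1 : ℕ) * h)) := by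
        simp only [mul_sum]
        refine sum_congr rfl fun k _ ↦ ?_
        rw [← exp_nat_mul, ← exp_neg, mul_left_comm l]
        ring
    _ ≤ c₂ * ∫ s in 0..N * h, exp (-(l * s)) * K s :=
        mul_le_mul_of_nonneg_left (mul_sum_range_le_integral_of_antitoneOn hh
          (antitoneOn_exp_neg_mul_mul hl hK hK₀) weighted_integrable) hc₂

theorem discrete_gronwall_weakly_singular_general (hT : 0 < T) (hc₂ : 0 ≤ c₂)
    (hK : AntitoneOn K (Set.Ioc 0 T)) (hK₀ : ∀ s ∈ Set.Ioc 0 T, 0 ≤ K s)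
    (hKi : IntegrableOn K (Set.Ioc 0 T)) :
    ∃ C : ℝ, 0 < C ∧ ∀ N : ℕ, 1 ≤ N → ∀ c₁ : ℝ, 0 ≤ c₁ → ∀ x : ℕ → ℝ,
      (∀ n ≤ N, x n ≤ c₁ + c₂ * (T / N) *
          ∑ j ∈ Icc 1 n, K ((n - j + 1 : ℕ) * (T / N)) * x (j - 1)) →
      ∀ n ≤ N, x n ≤ C * c₁ := by
  obtain ⟨l, hl, weighted_mass_le⟩ :=
    exists_mul_integral_exp_neg_mul_mul_le hT.le hKi c₂ one_half_pos
  refine ⟨2 * exp (l * T), by positivity, fun N hN c₁ hc₁ x hx n hn ↦ ?_⟩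
  have hh : 0 < T / N := by positivity
  have hNT : N * (T / N) = T := by field_simp
  generalize T / (N : ℝ) = h at hh hNT hx
  subst hNT
  have kernel_nonneg : ∀ k < N, 0 ≤ c₂ * h * K ((k + 1 : ℕ) * h) := fun k hk ↦
    mul_nonneg (by positivity) (hK₀ _ ⟨by positivity, by gcongr; exact hk⟩)
  have recursion : ∀ n ≤ N,
      x n ≤ c₁ + ∑ k ∈ range n, c₂ * h * K ((k + 1 : ℕ) * h) * x (n - (k + 1)) := by
    intro n hn
    refine (hx n hn).trans_eq ?_
    rw [sum_Icc_one_eq_sum_range_sub, mul_sum]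
    refine congrArg (c₁ + ·) (sum_congr rfl fun k hk ↦ ?_)
    rw [Nat.sub_sub_self (mem_range.1 hk).le, Nat.sub_sub, mul_assoc (c₂ * h)]
  calc x n ≤ c₁ / (1 - 1 / 2) * exp (l * h) ^ n :=
        le_div_mul_pow_of_le_add_sum (w := fun k ↦ c₂ * h * K (k * h)) kernel_nonneg hc₁
          (one_le_exp (by positivity)) one_half_lt_one
          ((sum_range_mul_inv_exp_pow_le_integral hh.le hl hc₂ hK hK₀ hKi).trans weighted_mass_le)
          recursion n hn
    _ = 2 * exp (l * (n * h)) * c₁ := by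
        rw [← exp_nat_mul, mul_left_comm l]
        ring
    _ ≤ 2 * exp (l * (N * h)) * c₁ := by gcongr

end

/-- Discrete Gronwall inequality with weakly singular kernel of exponent `1/2`:
for any `T > 0` and `c₂ ≥ 0` there is `C > 0` such that for any `N ≥ 1`,
with `Δt = T/N`, any `c₁ ≥ 0` and any nonnegative `(x_n)_{n=0}^N` with
`x_n ≤ c₁ + c₂ Δt ∑_{j=1}^n ((n-j+1)Δt)^{-1/2} x_{j-1}` for all `n ≤ N`,
one has `x_n ≤ C c₁` for all `n ≤ N`. -/
theorem discrete_gronwall_weakly_singular (T : ℝ) (hT : 0 < T) (c₂ : ℝ) (hc₂ : 0 ≤ c₂) :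
    ∃ C : ℝ, 0 < C ∧ ∀ N : ℕ, 1 ≤ N → ∀ c₁ : ℝ, 0 ≤ c₁ → ∀ x : ℕ → ℝ,
      (∀ n ≤ N, 0 ≤ x n) →
      (∀ n ≤ N, x n ≤ c₁ + c₂ * (T / N) *
          ∑ j ∈ Finset.Icc 1 n, (((n - j + 1 : ℕ) : ℝ) * (T / N)) ^ (-(1/2) : ℝ) * x (j - 1)) →
      ∀ n ≤ N, x n ≤ C * c₁ := by
  obtain ⟨C, hC, le_C_mul⟩ := discrete_gronwall_weakly_singular_general hT hc₂
    ((antitoneOn_rpow_Ioi_of_exponent_nonpos (by norm_num : (-(1/2) : ℝ) ≤ 0)).mono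
      Set.Ioc_subset_Ioi_self)
    (fun s hs ↦ rpow_nonneg hs.1.le _)
    ((intervalIntegral.intervalIntegrable_rpow' (by norm_num)).1)
  exact ⟨C, hC, fun N hN c₁ hc₁ x _ ↦ le_C_mul N hN c₁ hc₁ x⟩
end
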